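/- arXiv:2310.18960 — 2 statements merged into one kernel-verified Lean document; each statement's English description precedes it below -/
import Mathlib

section
/- Let T₁ = conv{a₁, a₂, a₃} and T₂ = conv{b₁, b₂, b₃} be nondegenerate triangles in ℝ³ (each vertex triple affinely independent) such that the 2-dimensional direction subspaces of their affine hulls are distinct. Then the Minkowski sum T₁ + T₂ is a half-zonotope but is not a zonotope. -/
open scoped Pointwise BigOperators

noncomputable section

/-- Scalar product on `ℝ^d`. -/
def dotp {d : ℕ} (z x : Fin d → ℝ) : ℝ := ∑ i, z i * x i

/-- Number of vertices (extreme points) of a set. -/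
def nVert {d : ℕ} (S : Set (Fin d → ℝ)) : ℕ := (Set.extremePoints ℝ S).ncard

/-- `t⁻ = min {z·x : x ∈ P}`. -/
def tMin {d : ℕ} (P : Set (Fin d → ℝ)) (z : Fin d → ℝ) : ℝ := sInf (dotp z '' P)

/-- `t⁺ = max {z·x : x ∈ P}`. -/
def tMax {d : ℕ} (P : Set (Fin d → ℝ)) (z : Fin d → ℝ) : ℝ := sSup (dotp z '' P)

/-- `A(P,z)`: the average number of vertices of the sections `P ∩ {x : z·x = t}`
over `t ∈ [t⁻, t⁺]`. -/
def avgVert {d : ℕ} (P : Set (Fin d → ℝ)) (z : Fin d → ℝ) : ℝ :=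
  (tMax P z - tMin P z)⁻¹ *
    ∫ t in tMin P z..tMax P z, ((nVert (P ∩ {x | dotp z x = t}) : ℝ))

/-- A convex polytope: the convex hull of a finite point set. -/
def IsPolytope {d : ℕ} (P : Set (Fin d → ℝ)) : Prop :=
  ∃ s : Finset (Fin d → ℝ), P = convexHull ℝ (s : Set (Fin d → ℝ))

/-- The vectors are nonzero and pairwise linearly independent. -/
def PairwiseIndep {d n : ℕ} (a : Fin n → (Fin d → ℝ)) : Prop :=
  (∀ i, a i ≠ 0) ∧ ∀ i j, i ≠ j → ∀ c : ℝ, a j ≠ c • a i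

/-- A zonotope: a translate of a Minkowski sum of segments `[0, aᵢ]` with pairwise
linearly independent nonzero generators. -/
def IsZonotope {d : ℕ} (P : Set (Fin d → ℝ)) : Prop :=
  ∃ (n : ℕ) (a : Fin n → (Fin d → ℝ)) (x : Fin d → ℝ),
    PairwiseIndep a ∧ P = {x} + ∑ i, segment ℝ 0 (a i)

/-- Central symmetry: there is `c` with `2c - P = P`. -/
def CentSymm {d : ℕ} (P : Set (Fin d → ℝ)) : Prop :=
  ∃ c : Fin d → ℝ, (fun y => (2 : ℝ) • c - y) '' P = P

/-- An edge of the hypergraph `ℱ` on the generator set `V`: a subset `W ⊆ V` spanning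
a 2-dimensional subspace, maximal with this property. -/
def IsHEdge (V W : Finset (Fin 3 → ℝ)) : Prop :=
  W ⊆ V ∧ Module.finrank ℝ (Submodule.span ℝ (W : Set (Fin 3 → ℝ))) = 2 ∧
    ∀ v ∈ V, v ∉ W →
      Module.finrank ℝ (Submodule.span ℝ (insert v (W : Set (Fin 3 → ℝ)))) = 3

/-- The degree of `v` in the hypergraph `ℱ` on `V`: the number of edges containing `v`. -/
def degF (V : Finset (Fin 3 → ℝ)) (v : Fin 3 → ℝ) : ℕ :=
  {W : Finset (Fin 3 → ℝ) | IsHEdge V W ∧ v ∈ W}.ncard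

/-- The set of edges of the polytope `P` that are parallel to `v`: one-dimensional
exposed faces `[u,w]` of `P` with `w - u` a nonzero multiple of `v`. -/
def edgesParallel {d : ℕ} (P : Set (Fin d → ℝ)) (v : Fin d → ℝ) : Set (Set (Fin d → ℝ)) :=
  {e | ∃ u w : Fin d → ℝ, u ≠ w ∧ e = segment ℝ u w ∧
    (∃ y : Fin d → ℝ, y ≠ 0 ∧ e = {x ∈ P | ∀ p ∈ P, dotp y p ≤ dotp y x}) ∧
    ∃ c : ℝ, c ≠ 0 ∧ w - u = c • v}

/-!
The difference body of a triangle is the sum of the segments from `0` to its three edge vectors,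
so `P - P` is a sum of six segments; dropping zero generators and merging parallel ones makes it
a zonotope.

A zonotope is centrally symmetric. Suppose `A + B` is, with `A` and `B` triangles in non-parallel
planes. Some linear functional `f` is constant on `B` but not on `A`, and since `A` has only three
vertices, `f` or `-f` attains its maximum over `A` at a single vertex `p`. The corresponding face
of `A + B` is `p + B`, and its opposite face contains a translate of `B`. Thus some point
reflection maps `B` into itself, which no triangle admits.
-/

section Symmetry

theorem singleton_sub_sum_segment {𝕜 E ι : Type*} [Ring 𝕜] [PartialOrder 𝕜] [IsOrderedRing 𝕜]
    [AddCommGroup E] [Module 𝕜 E] (s : Finset ι) (v : ι → E) :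
    {∑ i ∈ s, v i} - ∑ i ∈ s, segment 𝕜 0 (v i) = ∑ i ∈ s, segment 𝕜 0 (v i) := by
  have singleton_sub_segment (w : E) : {w} - segment 𝕜 0 w = segment 𝕜 0 w := by
    rw [Set.singleton_sub]
    simpa [segment_symm 𝕜 w] using image_segment 𝕜 (AffineEquiv.constVSub 𝕜 w).toAffineMap 0 w
  rw [← Set.finsetSum_singleton, ← Finset.sum_sub_distrib]
  exact Finset.sum_congr rfl fun i _ => singleton_sub_segment (v i)

theorem centSymm_iff_exists_singleton_sub_eq {d : ℕ} {P : Set (Fin d → ℝ)} :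
    CentSymm P ↔ ∃ c, {c} - P = P := by
  simp only [CentSymm, Set.singleton_sub]
  refine ⟨fun ⟨c, hc⟩ => ⟨(2 : ℝ) • c, hc⟩, fun ⟨c, hc⟩ => ⟨(2⁻¹ : ℝ) • c, ?_⟩⟩
  rwa [smul_inv_smul₀ two_ne_zero]

theorem IsZonotope.centSymm {d : ℕ} {P : Set (Fin d → ℝ)} (hP : IsZonotope P) : CentSymm P := by
  obtain ⟨n, a, x, -, rfl⟩ := hP
  refine centSymm_iff_exists_singleton_sub_eq.mpr ⟨(x + x) + ∑ i, a i, ?_⟩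
  rw [← Set.singleton_add_singleton, add_sub_add_comm, singleton_sub_sum_segment,
    Set.singleton_sub_singleton, add_sub_cancel_right]

end Symmetry

section Convexity

variable {𝕜 E : Type*} [Field 𝕜] [LinearOrder 𝕜] [IsStrictOrderedRing 𝕜]
  [AddCommGroup E] [Module 𝕜 E]

theorem mem_convexHull_range_iff_exists_weights {ι : Type*} [Fintype ι] {b : ι → E} {x : E} :
    x ∈ convexHull 𝕜 (Set.range b) ↔
      ∃ w : ι → 𝕜, (∀ i, 0 ≤ w i) ∧ ∑ i, w i = 1 ∧ ∑ i, w i • b i = x := by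
  classical
  have range_eq : Set.range b =
      Fintype.linearCombination 𝕜 b '' Set.range fun i j => if i = j then 1 else 0 := by
    rw [← Set.range_comp]
    congr 1; ext i; simp [Fintype.linearCombination_apply]
  rw [range_eq, ← LinearMap.image_convexHull, convexHull_basis_eq_stdSimplex]
  simp [stdSimplex, Fintype.linearCombination_apply, and_assoc]

theorem card_le_two_of_singleton_sub_convexHull_subset {ι : Type*} [Fintype ι] {b : ι → E}
    (hb : AffineIndependent 𝕜 b) {c : E}
    (hc : {c} - convexHull 𝕜 (Set.range b) ⊆ convexHull 𝕜 (Set.range b)) :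
    Fintype.card ι ≤ 2 := by
  classical
  -- In barycentric coordinates `c = (c - b i) + b i` has weights of sum 2, the `i`-th at least 1;
  -- by affine independence these weights do not depend on `i`, so `card ι ≤ 2`.
  have reflect_vertex (i : ι) : ∃ μ : ι → 𝕜,
      1 ≤ μ i ∧ ∑ j, μ j = 2 ∧ ∑ j, μ j • b j = c := by
    have hmem := hc (Set.sub_mem_sub rfl (subset_convexHull 𝕜 _ (Set.mem_range_self i)))
    obtain ⟨w, hw_nonneg, hw_sum, hw⟩ := mem_convexHull_range_iff_exists_weights.mp hmem
    refine ⟨w + Pi.single i 1, ?_, ?_, ?_⟩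
    · simp [hw_nonneg i]
    · simp [Finset.sum_add_distrib, hw_sum, one_add_one_eq_two]
    · simp [add_smul, Finset.sum_add_distrib, hw, Pi.single_apply]
  choose μ hμ_one hμ_sum hμ using reflect_vertex
  cases isEmpty_or_nonempty ι
  · simp
  obtain ⟨i₀⟩ := ‹Nonempty ι›
  have one_le (i : ι) : 1 ≤ μ i₀ i := by
    rw [hb.eq_of_sum_eq_sum ((hμ_sum i₀).trans (hμ_sum i).symm) ((hμ i₀).trans (hμ i).symm) i
      (Finset.mem_univ i)]
    exact hμ_one i
  have card_le : (Fintype.card ι : 𝕜) ≤ 2 := by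
    simpa [hμ_sum] using Finset.sum_le_sum fun i (_ : i ∈ Finset.univ) => one_le i
  exact_mod_cast card_le

-- `x ↦ c - x` carries the `f`-minimal part of `A + B`, which contains `r + B`, into its
-- `f`-maximal part `p + B`.
theorem singleton_sub_subset_of_add_of_forall_lt {E G : Type*} [AddCommGroup E] [AddCommGroup G]
    [LinearOrder G] [IsOrderedAddMonoid G] {A B : Set E} {f : E →+ G} {β : G}
    (hfB : ∀ x ∈ B, f x = β) {p r c : E} (hp : p ∈ A) (hr : r ∈ A)
    (hfp : ∀ x ∈ A, x ≠ p → f x < f p) (hfr : ∀ x ∈ A, f r ≤ f x)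
    (hc : {c} - (A + B) ⊆ A + B) : {c - r - p} - B ⊆ B := by
  rintro _ ⟨_, rfl, x, hx, rfl⟩
  obtain ⟨a, ha, y, hy, hay⟩ := hc (Set.sub_mem_sub rfl (Set.add_mem_add hp hx))
  obtain ⟨p', hp', z, hz, hpz⟩ := hc (Set.sub_mem_sub rfl (Set.add_mem_add hr hx))
  have hfa := congrArg f hay
  have hfp' := congrArg f hpz
  simp only [map_add, map_sub, hfB _ hx, hfB _ hy, hfB _ hz] at hfa hfp'
  have le_fp' : f p ≤ f p' := by
    have fr_le_fa : f r ≤ f a := hfr a ha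
    grind
  obtain rfl : p' = p := by_contra fun hne => (hfp p' hp' hne).not_ge le_fp'
  have hz_eq : c - r - p' - x = z := by
    rw [sub_right_comm, sub_sub c, ← hpz]
    exact add_sub_cancel_left p' z
  exact Set.mem_of_eq_of_mem hz_eq hz

theorem convex_insert_halfSpace_lt (f : E →ₗ[𝕜] 𝕜) (p : E) :
    Convex 𝕜 (insert p {x | f x < f p}) := by
  rw [convex_iff_openSegment_subset]
  rintro x hx y hy _ ⟨s, t, hs, ht, hst, rfl⟩
  have hfp : f p = s * f p + t * f p := by rw [← add_mul, hst, one_mul]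
  simp only [Set.mem_insert_iff, Set.mem_ofPred_eq, map_add, map_smul, smul_eq_mul] at hx hy ⊢
  rcases hx with rfl | hx <;> rcases hy with rfl | hy
  · exact Or.inl (by rw [← add_smul, hst, one_smul])
  all_goals
    right
    nlinarith

theorem lt_of_mem_convexHull_of_forall_lt {S : Set E} {f : E →ₗ[𝕜] 𝕜} {p : E}
    (hS : ∀ q ∈ S, q ≠ p → f q < f p) : ∀ x ∈ convexHull 𝕜 S, x ≠ p → f x < f p :=
  fun _ hx hxp => (convexHull_min (fun q hq => or_iff_not_imp_left.mpr (hS q hq))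
    (convex_insert_halfSpace_lt f p) hx).resolve_left hxp

theorem exists_strictMax_or_strictMin_of_card_le_three {α β : Type*} [LinearOrder β] {S : Finset α}
    (hS : S.card ≤ 3) {f : α → β} (hf : ∃ x ∈ S, ∃ y ∈ S, f x ≠ f y) :
    ∃ p ∈ S, (∀ q ∈ S, q ≠ p → f q < f p) ∨ ∀ q ∈ S, q ≠ p → f p < f q := by
  classical
  obtain ⟨x, hx, y, hy, hxy⟩ := hf
  obtain ⟨p, hp, hmax⟩ := S.exists_max_image f ⟨x, hx⟩
  obtain ⟨r, hr, hmin⟩ := S.exists_min_image f ⟨x, hx⟩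
  have hrp : f r < f p := lt_of_not_ge fun hpr => hxy <|
    ((hmax x hx).trans (hpr.trans (hmin y hy))).antisymm ((hmax y hy).trans (hpr.trans (hmin x hx)))
  by_contra! h
  obtain ⟨⟨p', hp', hpp', hfp'⟩, -⟩ := h p hp
  obtain ⟨-, r', hr', hrr', hfr'⟩ := h r hr
  have hsub : ({p, p', r, r'} : Finset α) ⊆ S := by grind
  have hcard : ({p, p', r, r'} : Finset α).card = 4 := by
    have hlt {u v : α} (huv : f u < f v) : v ≠ u := fun h => huv.ne (congrArg f h.symm)
    have hp'r' : f r' < f p' := (hfr'.trans_lt hrp).trans_le hfp'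
    simp [Finset.card_insert_of_notMem, hpp'.symm, hrr'.symm, hlt hrp, hlt hp'r',
      hlt (hfr'.trans_lt hrp), hlt (hrp.trans_le hfp')]
  exact absurd (Finset.card_le_card hsub) (by omega)

theorem exists_linearMap_const_not_const {k V : Type*} [Field k] [AddCommGroup V] [Module k V]
    {s t : Set V} (h : ¬ vectorSpan k s ≤ vectorSpan k t) :
    ∃ f : V →ₗ[k] k, (∀ x ∈ t, ∀ y ∈ t, f x = f y) ∧ ∃ x ∈ s, ∃ y ∈ s, f x ≠ f y := by
  obtain ⟨v, hvs, hvt⟩ : ∃ v ∈ s -ᵥ s, v ∉ vectorSpan k t := by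
    simpa only [vectorSpan, Submodule.span_le, Set.not_subset, SetLike.mem_coe] using h
  obtain ⟨x, hx, y, hy, rfl⟩ := hvs
  obtain ⟨f, hfxy, hft⟩ := Submodule.exists_le_ker_of_notMem hvt
  refine ⟨f, fun z hz w hw => ?_, x, hx, y, hy, ?_⟩
  · simpa [sub_eq_zero] using hft (vsub_mem_vectorSpan k hz hw)
  · simpa [sub_ne_zero] using hfxy

theorem exists_singleton_sub_subset_of_convexHull_add {S : Finset E} (hS : S.card ≤ 3) {B : Set E}
    (hSB : ¬ vectorSpan 𝕜 (S : Set E) ≤ vectorSpan 𝕜 B) {c : E}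
    (hc : {c} - (convexHull 𝕜 (S : Set E) + B) ⊆ convexHull 𝕜 (S : Set E) + B) :
    ∃ c', {c'} - B ⊆ B := by
  rcases B.eq_empty_or_nonempty with rfl | ⟨b, hb⟩
  · simp
  obtain ⟨f, hfB, hfS⟩ := exists_linearMap_const_not_const hSB
  have of_unique_max (g : E →ₗ[𝕜] 𝕜) (hgB : ∀ x ∈ B, g x = g b) {p : E} (hp : p ∈ S)
      (hgp : ∀ q ∈ S, q ≠ p → g q < g p) : ∃ c', {c'} - B ⊆ B := by
    obtain ⟨r, hr, hgr⟩ := S.exists_min_image g ⟨p, hp⟩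
    refine ⟨c - r - p, singleton_sub_subset_of_add_of_forall_lt (f := g.toAddMonoidHom) hgB
      (subset_convexHull 𝕜 _ hp) (subset_convexHull 𝕜 _ hr)
      (lt_of_mem_convexHull_of_forall_lt hgp) (fun x hx => ?_) hc⟩
    obtain ⟨q, hq, hqx⟩ := (g.concaveOn convex_univ).exists_le_of_mem_convexHull
      (Set.subset_univ _) hx
    exact (hgr q hq).trans hqx
  obtain ⟨p, hp, hmax | hmin⟩ := exists_strictMax_or_strictMin_of_card_le_three hS hfS
  · exact of_unique_max f (fun x hx => hfB x hx b hb) hp hmax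
  · exact of_unique_max (-f) (fun x hx => by simp [hfB x hx b hb]) hp (by simpa using hmin)

end Convexity

theorem not_centSymm_convexHull_add_simplex {d : ℕ} {S : Finset (Fin d → ℝ)} (hS : S.card ≤ 3)
    {ι : Type*} [Fintype ι] {b : ι → Fin d → ℝ} (hb : AffineIndependent ℝ b)
    (hι : 2 < Fintype.card ι)
    (hSb : ¬ vectorSpan ℝ (S : Set (Fin d → ℝ)) ≤ vectorSpan ℝ (Set.range b)) :
    ¬ CentSymm (convexHull ℝ (S : Set (Fin d → ℝ)) + convexHull ℝ (Set.range b)) := by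
  intro h
  obtain ⟨c, hc⟩ := centSymm_iff_exists_singleton_sub_eq.mp h
  rw [← direction_affineSpan ℝ (Set.range b), ← affineSpan_convexHull (𝕜 := ℝ) (Set.range b),
    direction_affineSpan] at hSb
  obtain ⟨c', hc'⟩ := exists_singleton_sub_subset_of_convexHull_add hS hSb hc.subset
  exact hι.not_ge (card_le_two_of_singleton_sub_convexHull_subset hb hc')

section HalfZonotope

theorem segment_zero_add_segment_zero_smul {𝕜 E : Type*} [Field 𝕜] [LinearOrder 𝕜]
    [IsStrictOrderedRing 𝕜] [AddCommGroup E] [Module 𝕜 E] (v : E) (t : 𝕜) :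
    segment 𝕜 0 v + segment 𝕜 0 (t • v) =
      {min 0 t • v} + segment 𝕜 0 ((1 + |t|) • v) := by
  have segment_zero_smul (s : 𝕜) :
      segment 𝕜 0 (s • v) = LinearMap.toSpanSingleton 𝕜 E v '' Set.uIcc 0 s := by
    rw [← segment_eq_uIcc]
    simpa using (image_segment 𝕜 (LinearMap.toSpanSingleton 𝕜 E v).toAffineMap 0 s).symm
  have interval_add :
      Set.uIcc 0 1 + Set.uIcc 0 t = {min 0 t} + Set.uIcc 0 (1 + |t|) := by
    have max_eq : max 0 t = min 0 t + |t| := by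
      rw [← sub_eq_iff_eq_add', max_sub_min_eq_abs, sub_zero]
    have : (0 : 𝕜) ≤ 1 + |t| := by positivity
    rw [Set.uIcc_of_le zero_le_one, Set.uIcc, Set.uIcc_of_le this,
      Set.Icc_add_Icc zero_le_one inf_le_sup, Set.singleton_add, Set.image_const_add_Icc,
      add_zero, zero_add, add_left_comm, max_eq]
  calc segment 𝕜 0 v + segment 𝕜 0 (t • v)
      = LinearMap.toSpanSingleton 𝕜 E v '' (Set.uIcc 0 1 + Set.uIcc 0 t) := by
        rw [Set.image_add, ← segment_zero_smul, ← segment_zero_smul, one_smul]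
    _ = {min 0 t • v} + segment 𝕜 0 ((1 + |t|) • v) := by
        rw [interval_add, Set.image_add, Set.image_singleton, segment_zero_smul,
          LinearMap.toSpanSingleton_apply]

theorem isZonotope_singleton_add_sum_segment {d n : ℕ} (x : Fin d → ℝ) (v : Fin n → Fin d → ℝ) :
    IsZonotope ({x} + ∑ i, segment ℝ 0 (v i)) := by
  induction n generalizing x with
  | zero => exact ⟨0, v, x, ⟨fun i => i.elim0, fun i => i.elim0⟩, rfl⟩
  | succ n ih =>
    by_cases hv : PairwiseIndep v
    · exact ⟨n + 1, v, x, hv, rfl⟩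
    obtain ⟨j, hj⟩ | ⟨i, j, hij, t, ht⟩ :
        (∃ j, v j = 0) ∨ ∃ i j, i ≠ j ∧ ∃ t : ℝ, v j = t • v i := by
      unfold PairwiseIndep at hv
      push Not at hv
      exact or_iff_not_imp_left.mpr fun h => hv (not_exists.mp h)
    · rw [Fin.sum_univ_succAbove _ j, hj, segment_same, Set.singleton_zero, zero_add]
      exact ih x _
    · obtain ⟨i, rfl⟩ := Fin.exists_succAbove_eq hij
      set w : Fin n → Fin d → ℝ := fun l => v (j.succAbove l)
      have merge : ∑ l, segment ℝ 0 (v l) =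
          {min 0 t • w i} +
            ∑ l, segment ℝ 0 (Function.update w i ((1 + |t|) • w i) l) := by
        have update_off : ∀ l ∈ ({i} : Finset (Fin n))ᶜ,
            segment ℝ 0 (Function.update w i ((1 + |t|) • w i) l) = segment ℝ 0 (w l) :=
          fun l hl => by rw [Function.update_of_ne (by simpa using hl)]
        rw [Fin.sum_univ_succAbove _ j, ht, Fintype.sum_eq_add_sum_compl i,
          Fintype.sum_eq_add_sum_compl i, Finset.sum_congr rfl update_off, Function.update_self,
          ← add_assoc, ← add_assoc, ← segment_zero_add_segment_zero_smul,
          add_comm (segment ℝ 0 (t • _))]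
      rw [merge, ← add_assoc, Set.singleton_add_singleton]
      exact ih _ _

theorem IsZonotope.add {d : ℕ} {P Q : Set (Fin d → ℝ)} (hP : IsZonotope P) (hQ : IsZonotope Q) :
    IsZonotope (P + Q) := by
  obtain ⟨m, v, x, -, rfl⟩ := hP
  obtain ⟨n, w, y, -, rfl⟩ := hQ
  have h := isZonotope_singleton_add_sum_segment (x + y) (Fin.append v w)
  simp only [Fin.sum_univ_add, Fin.append_left, Fin.append_right] at h
  rwa [← Set.singleton_add_singleton, add_add_add_comm] at h

theorem convexHull_triple_sub_self {𝕜 E : Type*} [Field 𝕜] [LinearOrder 𝕜]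
    [IsStrictOrderedRing 𝕜] [AddCommGroup E] [Module 𝕜 E] (a₁ a₂ a₃ : E) :
    convexHull 𝕜 {a₁, a₂, a₃} - convexHull 𝕜 {a₁, a₂, a₃} =
      segment 𝕜 0 (a₂ - a₁) + segment 𝕜 0 (a₃ - a₂) + segment 𝕜 0 (a₁ - a₃) := by
  have vertices : ({a₁, a₂, a₃} - {a₁, a₂, a₃} : Set E) =
      {0, a₂ - a₁} + {0, a₃ - a₂} + {0, a₁ - a₃} := by
    simp only [Set.insert_eq, Set.union_add, Set.add_union, Set.union_sub, Set.sub_union,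
      Set.singleton_add_singleton, Set.singleton_sub_singleton, sub_self, zero_add, add_zero,
      sub_add_sub_cancel, sub_add_sub_cancel']
    ext; simp only [Set.mem_union, Set.mem_singleton_iff]; tauto
  simp only [← convexHull_pair, ← convexHull_add, ← convexHull_sub, vertices]

theorem isZonotope_convexHull_triple_sub_self {d : ℕ} (a₁ a₂ a₃ : Fin d → ℝ) :
    IsZonotope (convexHull ℝ {a₁, a₂, a₃} - convexHull ℝ {a₁, a₂, a₃}) := by
  rw [convexHull_triple_sub_self]
  simpa [Fin.sum_univ_three] using
    isZonotope_singleton_add_sum_segment 0 ![a₂ - a₁, a₃ - a₂, a₁ - a₃]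

end HalfZonotope

theorem range_vec_three {α : Type*} (x y z : α) : Set.range ![x, y, z] = {x, y, z} := by
  rw [Matrix.range_cons, Matrix.range_cons_cons_empty, Set.singleton_union]

theorem direction_affineSpan_triple_eq_of_le {k V : Type*} [DivisionRing k] [AddCommGroup V]
    [Module k V] {a₁ a₂ a₃ b₁ b₂ b₃ : V} (ha : AffineIndependent k ![a₁, a₂, a₃])
    (hb : AffineIndependent k ![b₁, b₂, b₃])
    (hle : (affineSpan k {a₁, a₂, a₃}).direction ≤ (affineSpan k {b₁, b₂, b₃}).direction) :
    (affineSpan k {a₁, a₂, a₃}).direction = (affineSpan k {b₁, b₂, b₃}).direction := by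
  simp only [direction_affineSpan, ← range_vec_three] at hle ⊢
  have := finiteDimensional_vectorSpan_range k ![b₁, b₂, b₃]
  refine ha.vectorSpan_eq_of_le_of_card_eq_finrank_add_one hle ?_
  rw [hb.finrank_vectorSpan_add_one]

theorem triangle_sum_halfZonotope_not_zonotope_general {d : ℕ} (a₁ a₂ a₃ b₁ b₂ b₃ : Fin d → ℝ)
    (hb : AffineIndependent ℝ ![b₁, b₂, b₃])
    (hdir : ¬ (affineSpan ℝ ({a₁, a₂, a₃} : Set (Fin d → ℝ))).direction ≤
      (affineSpan ℝ ({b₁, b₂, b₃} : Set (Fin d → ℝ))).direction)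
    (P : Set (Fin d → ℝ))
    (hP : P = convexHull ℝ {a₁, a₂, a₃} + convexHull ℝ {b₁, b₂, b₃}) :
    IsZonotope (P - P) ∧ ¬ IsZonotope P := by
  classical
  subst hP
  constructor
  · rw [add_sub_add_comm]
    exact (isZonotope_convexHull_triple_sub_self a₁ a₂ a₃).add
      (isZonotope_convexHull_triple_sub_self b₁ b₂ b₃)
  · have hA : (({a₁, a₂, a₃} : Finset (Fin d → ℝ)) : Set (Fin d → ℝ)) = {a₁, a₂, a₃} := by simp
    rw [direction_affineSpan, direction_affineSpan, ← hA, ← range_vec_three b₁ b₂ b₃] at hdir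
    have not_centSymm := not_centSymm_convexHull_add_simplex Finset.card_le_three hb (by simp) hdir
    rw [hA, range_vec_three] at not_centSymm
    exact fun h => not_centSymm h.centSymm

/-- The Minkowski sum of two nondegenerate triangles in `ℝ³` lying in
planes with distinct direction subspaces is a half-zonotope but not a zonotope. -/
theorem triangle_sum_halfZonotope_not_zonotope (a₁ a₂ a₃ b₁ b₂ b₃ : Fin 3 → ℝ)
    (ha : AffineIndependent ℝ ![a₁, a₂, a₃])
    (hb : AffineIndependent ℝ ![b₁, b₂, b₃])
    (hdir : (affineSpan ℝ ({a₁, a₂, a₃} : Set (Fin 3 → ℝ))).direction ≠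
      (affineSpan ℝ ({b₁, b₂, b₃} : Set (Fin 3 → ℝ))).direction)
    (P : Set (Fin 3 → ℝ))
    (hP : P = convexHull ℝ {a₁, a₂, a₃} + convexHull ℝ {b₁, b₂, b₃}) :
    IsZonotope (P - P) ∧ ¬ IsZonotope P :=
  triangle_sum_halfZonotope_not_zonotope_general a₁ a₂ a₃ b₁ b₂ b₃ hb
    (fun hle => hdir (direction_affineSpan_triple_eq_of_le ha hb hle)) P hP
end
end

section
/- Let P ⊂ ℝ² be a convex polygon with nonempty interior and V₀ vertices, let z ∈ ℝ² be nonzero, and let t⁻ = min{z·x : x ∈ P}, t⁺ = max{z·x : x ∈ P}. Then (1/(t⁺−t⁻)) · ∫_{t⁻}^{t⁺} ( (number of vertices of P ∩ {x : z·x ≤ t}) + (number of vertices of P ∩ {x : z·x ≥ t}) )/2 dt = V₀/2 + 2. In particular this expected vertex number equals V₀ if and only if V₀ = 4. -/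
open scoped Pointwise BigOperators

noncomputable section

/-!
A vertex of a piece of `P` cut at level `t` is either a vertex of `P` strictly on that side or a
vertex of the section `P ∩ {x | dotp z x = t}`. For all but finitely many `t` no vertex of `P` lies
on the cutting line, so each vertex of `P` is counted once and each vertex of the section twice.
In the plane the section at an intermediate level is a nondegenerate segment, so the two pieces
together have `V₀ + 4` vertices for almost every `t`.
-/

section Field

variable {𝕜 E F : Type*} [Field 𝕜] [LinearOrder 𝕜] [IsStrictOrderedRing 𝕜]
  [AddCommGroup E] [Module 𝕜 E] [AddCommGroup F] [Module 𝕜 F]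

theorem extremePoints_image_of_injOn {A : Set E} (hA : Convex 𝕜 A) (f : E →ᵃ[𝕜] F)
    (hf : Set.InjOn f A) : (f '' A).extremePoints 𝕜 = f '' A.extremePoints 𝕜 := by
  ext y
  constructor
  · rintro ⟨⟨x, hx, rfl⟩, hext⟩
    refine ⟨x, ⟨hx, fun x₁ h₁ x₂ h₂ hx₁₂ ↦ hf h₁ hx ?_⟩, rfl⟩
    exact hext ⟨x₁, h₁, rfl⟩ ⟨x₂, h₂, rfl⟩ (image_openSegment 𝕜 f x₁ x₂ ▸ ⟨x, hx₁₂, rfl⟩)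
  · rintro ⟨x, ⟨hx, hext⟩, rfl⟩
    refine ⟨⟨x, hx, rfl⟩, ?_⟩
    rintro _ ⟨x₁, h₁, rfl⟩ _ ⟨x₂, h₂, rfl⟩ hx₁₂
    rw [← image_openSegment] at hx₁₂
    obtain ⟨w, hw, hwx⟩ := hx₁₂
    obtain rfl : w = x := hf (hA.openSegment_subset h₁ h₂ hw) hx hwx
    rw [hext h₁ h₂ hw]

theorem isExtreme_inter_eq_inter_le (A : Set E) (l : E →ₗ[𝕜] 𝕜) (t : 𝕜) :
    IsExtreme 𝕜 (A ∩ {x | l x ≤ t}) (A ∩ {x | l x = t}) := by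
  refine ⟨fun x hx ↦ ⟨hx.1, hx.2.le⟩, ?_⟩
  rintro x ⟨hxA, hx : l x ≤ t⟩ y ⟨-, hy : l y ≤ t⟩ _ ⟨-, hw : l _ = t⟩ ⟨a, b, ha, hb, hab, rfl⟩
  refine ⟨hxA, hx.antisymm (le_of_mul_le_mul_left ?_ ha)⟩
  calc a * t = t - b * t := by linear_combination t * hab
    _ ≤ t - b * l y := by gcongr
    _ = a * l x := by simp only [map_add, map_smul, smul_eq_mul] at hw; linear_combination -hw

theorem mem_extremePoints_of_mem_extremePoints_inter_le {A : Set E} (hA : Convex 𝕜 A)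
    (l : E →ₗ[𝕜] 𝕜) {t : 𝕜} {x : E} (hx : x ∈ (A ∩ {x | l x ≤ t}).extremePoints 𝕜)
    (hxt : l x < t) : x ∈ A.extremePoints 𝕜 := by
  refine ⟨hx.1.1, fun x₁ h₁ x₂ h₂ hx₁₂ ↦ ?_⟩
  -- Shrinking a segment of `A` around `x` towards `x` moves its endpoints into the half-space.
  obtain ⟨s, hs, hst⟩ := exists_pos_mul_lt (sub_pos.2 hxt)
    (max (t - l x) (max (l x₁ - l x) (l x₂ - l x)))
  simp only [max_mul_of_nonneg _ _ hs.le, max_lt_iff] at hst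
  obtain ⟨hs_t, hs₁, hs₂⟩ := hst
  have hs1 : s ≤ 1 := by nlinarith
  have mem_cut {u : E} (hu : u ∈ A) (hsu : (l u - l x) * s < t - l x) :
      AffineMap.lineMap x u s ∈ A ∩ {x | l x ≤ t} := by
    refine ⟨hA.lineMap_mem hx.1.1 hu ⟨hs.le, hs1⟩, ?_⟩
    simp only [Set.mem_ofPred_eq, AffineMap.lineMap_apply_module', map_add, map_smul, map_sub,
      smul_eq_mul]
    linarith
  have hx_shrunk : x ∈ openSegment 𝕜 (AffineMap.lineMap x x₁ s) (AffineMap.lineMap x x₂ s) := by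
    have h := Set.mem_image_of_mem (AffineMap.homothety x s) hx₁₂
    rwa [image_openSegment, AffineMap.homothety_apply_same] at h
  have h_eq := hx.2 (mem_cut h₁ hs₁) (mem_cut h₂ hs₂) hx_shrunk
  exact ((AffineMap.lineMap_eq_left_iff.1 h_eq).resolve_right hs.ne').symm

theorem extremePoints_inter_le {A : Set E} (hA : Convex 𝕜 A) (l : E →ₗ[𝕜] 𝕜) (t : 𝕜) :
    (A ∩ {x | l x ≤ t}).extremePoints 𝕜 =
      (A.extremePoints 𝕜 ∩ {x | l x < t}) ∪ (A ∩ {x | l x = t}).extremePoints 𝕜 := by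
  have hext := isExtreme_inter_eq_inter_le A l t
  ext x
  constructor
  · intro hx
    rcases (show l x ≤ t from hx.1.2).lt_or_eq with hlt | heq
    · exact Or.inl ⟨mem_extremePoints_of_mem_extremePoints_inter_le hA l hx hlt, hlt⟩
    · exact Or.inr (hext.extremePoints_eq ▸ ⟨⟨hx.1.1, heq⟩, hx⟩)
  · rintro (⟨hx, hxt⟩ | hx)
    · exact inter_extremePoints_subset_extremePoints_of_subset Set.inter_subset_left
        ⟨⟨hx.1, le_of_lt hxt⟩, hx⟩
    · exact hext.extremePoints_subset_extremePoints hx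

theorem encard_extremePoints_inter_le {A : Set E} (hA : Convex 𝕜 A) (l : E →ₗ[𝕜] 𝕜) (t : 𝕜) :
    ((A ∩ {x | l x ≤ t}).extremePoints 𝕜).encard =
      (A.extremePoints 𝕜 ∩ {x | l x < t}).encard +
        ((A ∩ {x | l x = t}).extremePoints 𝕜).encard := by
  rw [extremePoints_inter_le hA, Set.encard_union_eq]
  exact Set.disjoint_left.2 fun x hx hx' ↦ (show l x < t from hx.2).ne hx'.1.2

theorem encard_extremePoints_inter_ge {A : Set E} (hA : Convex 𝕜 A) (l : E →ₗ[𝕜] 𝕜) (t : 𝕜) :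
    ((A ∩ {x | t ≤ l x}).extremePoints 𝕜).encard =
      (A.extremePoints 𝕜 ∩ {x | t < l x}).encard +
        ((A ∩ {x | l x = t}).extremePoints 𝕜).encard := by
  simpa using encard_extremePoints_inter_le hA (-l) (-t)

theorem encard_extremePoints_inter_le_add_inter_ge {A : Set E} (hA : Convex 𝕜 A)
    (l : E →ₗ[𝕜] 𝕜) {t : 𝕜} (ht : t ∉ l '' A.extremePoints 𝕜) :
    ((A ∩ {x | l x ≤ t}).extremePoints 𝕜).encard + ((A ∩ {x | t ≤ l x}).extremePoints 𝕜).encard =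
      (A.extremePoints 𝕜).encard + 2 * ((A ∩ {x | l x = t}).extremePoints 𝕜).encard := by
  have h_split : (A.extremePoints 𝕜).encard =
      (A.extremePoints 𝕜 ∩ {x | l x < t}).encard + (A.extremePoints 𝕜 ∩ {x | t < l x}).encard := by
    rw [← Set.encard_union_eq, ← Set.inter_union_distrib_left, Set.inter_eq_left.2]
    · exact fun x hx ↦ lt_or_gt_of_ne fun hxt ↦ ht ⟨x, hx, hxt⟩
    · exact Set.disjoint_left.2 fun x hx hx' ↦
        lt_asymm (show l x < t from hx.2) (show t < l x from hx'.2)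
  rw [encard_extremePoints_inter_le hA, encard_extremePoints_inter_ge hA, h_split]
  ring

end Field

section Topological

variable {E : Type*} [AddCommGroup E] [Module ℝ E] [TopologicalSpace E]

theorem encard_extremePoints_eq_two_of_collinear [SeparatingDual ℝ E] {S : Set E}
    (hcol : Collinear ℝ S) (hconv : Convex ℝ S) (hcomp : IsCompact S) (hnt : S.Nontrivial) :
    (S.extremePoints ℝ).encard = 2 := by
  obtain ⟨x, hx, y, hy, hxy⟩ := hnt
  obtain ⟨g, hg⟩ := SeparatingDual.exists_separating_of_ne (R := ℝ) hxy
  have hinj : Set.InjOn g S := by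
    obtain ⟨v, hv⟩ := (collinear_iff_of_mem hx).1 hcol
    have hgv : g v ≠ 0 := fun hgv ↦ hg <| by
      obtain ⟨r, rfl⟩ := hv y hy
      simp [hgv]
    intro p hp q hq hpq
    obtain ⟨r, rfl⟩ := hv p hp
    obtain ⟨r', rfl⟩ := hv q hq
    obtain rfl : r = r' := by simpa [hgv] using hpq
    rfl
  have himage_conn : IsConnected (g '' S) :=
    ⟨⟨g x, x, hx, rfl⟩, (hconv.linear_image (g : E →ₗ[ℝ] ℝ)).isPreconnected⟩
  obtain ⟨a, b, hIcc⟩ : ∃ a b, g '' S = Set.Icc a b :=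
    ⟨_, _, eq_Icc_of_connected_compact himage_conn (hcomp.image g.continuous)⟩
  have hab : a < b := by
    by_contra! hba
    have hsub : (g '' S).Subsingleton := hIcc ▸ Set.subsingleton_Icc_of_ge hba
    exact hg (hsub ⟨x, hx, rfl⟩ ⟨y, hy, rfl⟩)
  calc (S.extremePoints ℝ).encard
      = (g '' S.extremePoints ℝ).encard := (hinj.mono extremePoints_subset).encard_image.symm
    _ = ((g '' S).extremePoints ℝ).encard :=
        congrArg Set.encard
          (extremePoints_image_of_injOn hconv (g : E →ₗ[ℝ] ℝ).toAffineMap hinj).symm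
    _ = 2 := by rw [hIcc, Set.extremePoints_Icc hab.le, Set.encard_pair hab.ne]

variable [IsTopologicalAddGroup E] [ContinuousSMul ℝ E]

theorem nontrivial_inter_eq_of_mem_interior {K : Set E} (l : E →ₗ[ℝ] ℝ) (hl : l.ker ≠ ⊥) {q : E}
    (hq : q ∈ interior K) : (K ∩ {x | l x = l q}).Nontrivial := by
  obtain ⟨w, hw, hw0⟩ := l.ker.exists_mem_ne_zero_of_ne_bot hl
  have hline : Filter.Tendsto (fun s : ℝ ↦ q + s • w) (nhdsWithin 0 {0}ᶜ) (nhds q) := by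
    have hcont : Continuous fun s : ℝ ↦ q + s • w := by fun_prop
    simpa using (hcont.tendsto 0).mono_left nhdsWithin_le_nhds
  obtain ⟨s, hsK, hs0 : s ≠ 0⟩ :=
    ((hline.eventually (mem_interior_iff_mem_nhds.1 hq)).and self_mem_nhdsWithin).exists
  refine ⟨q, ⟨interior_subset hq, rfl⟩, q + s • w, ⟨hsK, ?_⟩, ?_⟩
  · simp [LinearMap.mem_ker.1 hw]
  · simp [hs0, hw0]

theorem encard_extremePoints_inter_eq_of_finrank_eq_two [SeparatingDual ℝ E]
    (hE : Module.finrank ℝ E = 2) {K : Set E} (hconv : Convex ℝ K) (hcomp : IsCompact K)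
    {l : StrongDual ℝ E} (hl : l ≠ 0) {q : E} (hq : q ∈ interior K) :
    ((K ∩ {x | l x = l q}).extremePoints ℝ).encard = 2 := by
  have : FiniteDimensional ℝ E := .of_finrank_eq_succ hE
  have hker : Module.finrank ℝ l.ker = 1 := by
    have hl' : (l : E →ₗ[ℝ] ℝ) ≠ 0 := fun h ↦ hl (ContinuousLinearMap.coe_inj.1 h)
    have := Module.Dual.finrank_ker_add_one_of_ne_zero hl'
    lia
  apply encard_extremePoints_eq_two_of_collinear
  · have hspan : vectorSpan ℝ (K ∩ {x | l x = l q}) ≤ l.ker := by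
      rw [vectorSpan_def, Submodule.span_le]
      rintro _ ⟨x, ⟨-, hx⟩, y, ⟨-, hy⟩, rfl⟩
      simp_all
    exact collinear_iff_finrank_le_one.2 ((Submodule.finrank_mono hspan).trans_eq hker)
  · exact hconv.inter (convex_hyperplane l.isLinear _)
  · exact hcomp.inter_right (isClosed_eq l.continuous continuous_const)
  · exact nontrivial_inter_eq_of_mem_interior (l : E →ₗ[ℝ] ℝ)
      (Submodule.one_le_finrank_iff.1 hker.ge) hq

theorem exists_mem_interior_eq_of_mem_Ioo {K : Set E} (hconv : Convex ℝ K)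
    (hint : (interior K).Nonempty) {f : E → ℝ} (hf : Continuous f) {t : ℝ}
    (ht : t ∈ Set.Ioo (sInf (f '' K)) (sSup (f '' K))) : ∃ q ∈ interior K, f q = t := by
  have hne : (f '' K).Nonempty := (hint.mono interior_subset).image f
  have meets_interior {U : Set ℝ} (hU : IsOpen U) {x : E} (hx : x ∈ K) (hxU : f x ∈ U) :
      ∃ y ∈ interior K, f y ∈ U := by
    have hcl : x ∈ closure (interior K) :=
      hconv.closure_interior_eq_closure_of_nonempty_interior hint ▸ subset_closure hx
    obtain ⟨y, hyU, hy⟩ := mem_closure_iff.1 hcl _ (hU.preimage hf) hxU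
    exact ⟨y, hy, hyU⟩
  obtain ⟨_, ⟨x, hx, rfl⟩, hxt⟩ := exists_lt_of_csInf_lt hne ht.1
  obtain ⟨_, ⟨y, hy, rfl⟩, hyt⟩ := exists_lt_of_lt_csSup hne ht.2
  obtain ⟨x', hx', hxt'⟩ := meets_interior isOpen_Iio hx hxt
  obtain ⟨y', hy', hyt'⟩ := meets_interior isOpen_Ioi hy hyt
  exact hconv.interior.isPreconnected.intermediate_value hx' hy' hf.continuousOn
    ⟨hxt'.le, hyt'.le⟩

theorem sInf_image_lt_sSup_image {K : Set E} (hcomp : IsCompact K) (hint : (interior K).Nonempty)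
    {l : StrongDual ℝ E} (hl : l ≠ 0) : sInf (l '' K) < sSup (l '' K) := by
  have hcomp' : IsCompact (l '' K) := hcomp.image l.continuous
  have h_image : l '' interior K ⊆ Set.Ioo (sInf (l '' K)) (sSup (l '' K)) := by
    rw [← interior_Icc]
    exact interior_maximal ((Set.image_mono interior_subset).trans
      (subset_Icc_csInf_csSup hcomp'.bddBelow hcomp'.bddAbove))
      (l.isOpenMap_of_ne_zero hl _ isOpen_interior)
  exact Set.nonempty_Ioo.1 ((hint.image l).mono h_image)

end Topological

section Average

variable {d : ℕ} {P : Set (Fin d → ℝ)} {z : Fin d → ℝ} {k : ℕ}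

/-- The functional `dotp z`, bundled as an element of the continuous dual. -/
def dotpDual (z : Fin d → ℝ) : StrongDual ℝ (Fin d → ℝ) :=
  LinearMap.toContinuousLinearMap (dotProductEquiv ℝ (Fin d) z)

theorem dotpDual_apply (z x : Fin d → ℝ) : dotpDual z x = dotp z x := rfl

theorem dotpDual_ne_zero (hz : z ≠ 0) : dotpDual z ≠ 0 := by
  simpa [dotpDual] using hz

theorem nVert_inter_le_add_nVert_inter_ge (hconv : Convex ℝ P) (hfin : (P.extremePoints ℝ).Finite)
    {t : ℝ} (ht : t ∉ dotp z '' P.extremePoints ℝ)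
    (hk : ((P ∩ {x | dotp z x = t}).extremePoints ℝ).encard = k) :
    nVert (P ∩ {x | dotp z x ≤ t}) + nVert (P ∩ {x | t ≤ dotp z x}) = nVert P + 2 * k := by
  have h : ((P ∩ {x | dotp z x ≤ t}).extremePoints ℝ).encard +
      ((P ∩ {x | t ≤ dotp z x}).extremePoints ℝ).encard = (nVert P + 2 * k : ℕ) := by
    push_cast
    rw [nVert, hfin.cast_ncard_eq, ← hk]
    have ht' : t ∉ dotpDual z '' P.extremePoints ℝ := ht
    simpa only [ContinuousLinearMap.coe_coe, dotpDual_apply] using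
      encard_extremePoints_inter_le_add_inter_ge hconv (dotpDual z : (Fin d → ℝ) →ₗ[ℝ] ℝ) ht'
  obtain ⟨h₁, h₂⟩ := WithTop.add_ne_top.1 (h.trans_ne (ENat.natCast_ne_top _))
  calc nVert (P ∩ {x | dotp z x ≤ t}) + nVert (P ∩ {x | t ≤ dotp z x})
      = (((P ∩ {x | dotp z x ≤ t}).extremePoints ℝ).encard +
          ((P ∩ {x | t ≤ dotp z x}).extremePoints ℝ).encard).toNat := (ENat.toNat_add h₁ h₂).symm
    _ = nVert P + 2 * k := by rw [h, ENat.toNat_natCast]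

theorem average_nVert_cuts_eq (hconv : Convex ℝ P) (hfin : (P.extremePoints ℝ).Finite)
    (hlt : tMin P z < tMax P z) (hk : ∀ t ∈ Set.Ioo (tMin P z) (tMax P z),
      ((P ∩ {x | dotp z x = t}).extremePoints ℝ).encard = k) :
    (tMax P z - tMin P z)⁻¹ *
      ∫ t in tMin P z..tMax P z,
        (((nVert (P ∩ {x | dotp z x ≤ t}) : ℝ) + (nVert (P ∩ {x | t ≤ dotp z x}) : ℝ)) / 2) =
      (nVert P : ℝ) / 2 + k := by
  have h_ae : ∀ᵐ t : ℝ, t ∉ dotp z '' P.extremePoints ℝ ∪ {tMax P z} :=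
    ((hfin.image _).union (Set.finite_singleton _)).countable.ae_notMem _
  rw [intervalIntegral.integral_congr_ae (g := fun _ ↦ (nVert P : ℝ) / 2 + k),
    intervalIntegral.integral_const, smul_eq_mul, inv_mul_cancel_left₀ (sub_pos.2 hlt).ne']
  filter_upwards [h_ae] with t ht ht_mem
  rw [Set.uIoc_of_le hlt.le] at ht_mem
  obtain ⟨ht_vert, ht_max⟩ := not_or.1 ht
  have h_cut := nVert_inter_le_add_nVert_inter_ge hconv hfin ht_vert
    (hk t ⟨ht_mem.1, ht_mem.2.lt_of_ne ht_max⟩)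
  rw [← Nat.cast_add, h_cut]
  push_cast
  ring

end Average

/-- For a convex polygon `P ⊂ ℝ²` with nonempty interior and `V₀`
vertices, the expected average vertex number of the two pieces of a uniform random cut
orthogonal to `z` equals `V₀/2 + 2`; in particular it equals `V₀` iff `V₀ = 4`. -/
theorem expected_cut_vertices_2D (P : Set (Fin 2 → ℝ)) (hP : IsPolytope P)
    (hint : (interior P).Nonempty) (z : Fin 2 → ℝ) (hz : z ≠ 0) :
    ((tMax P z - tMin P z)⁻¹ *
      ∫ t in tMin P z..tMax P z,
        (((nVert (P ∩ {x | dotp z x ≤ t}) : ℝ) +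
          (nVert (P ∩ {x | t ≤ dotp z x}) : ℝ)) / 2) =
      (nVert P : ℝ) / 2 + 2) ∧
    ((tMax P z - tMin P z)⁻¹ *
      ∫ t in tMin P z..tMax P z,
        (((nVert (P ∩ {x | dotp z x ≤ t}) : ℝ) +
          (nVert (P ∩ {x | t ≤ dotp z x}) : ℝ)) / 2) =
      (nVert P : ℝ) ↔ nVert P = 4) := by
  obtain ⟨s, rfl⟩ := hP
  set P := convexHull ℝ (s : Set (Fin 2 → ℝ))
  have hconv : Convex ℝ P := convex_convexHull ℝ _
  have hcomp : IsCompact P := s.finite_toSet.isCompact_convexHull ℝ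
  have hfin : (P.extremePoints ℝ).Finite := s.finite_toSet.subset extremePoints_convexHull_subset
  have hl := dotpDual_ne_zero hz
  have hsection (t : ℝ) (ht : t ∈ Set.Ioo (tMin P z) (tMax P z)) :
      ((P ∩ {x | dotp z x = t}).extremePoints ℝ).encard = (2 : ℕ) := by
    obtain ⟨q, hq, rfl⟩ := exists_mem_interior_eq_of_mem_Ioo hconv hint (dotpDual z).continuous ht
    exact encard_extremePoints_inter_eq_of_finrank_eq_two (by simp) hconv hcomp hl hq
  have hmean := average_nVert_cuts_eq hconv hfin (sInf_image_lt_sSup_image hcomp hint hl) hsection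
  rw [hmean, ← Nat.cast_inj (R := ℝ)]
  push_cast
  exact ⟨rfl, by constructor <;> intro h <;> linarith⟩
end
end
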